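/- Second topological-charge conservation law (vanishing density) for the potential Kawahara–KP equation: if v solves the potential Kawahara–KP equation and f : ℝ → ℝ is any smooth function, then ∂_x Φˣ + ∂_y Φʸ = 0 holds at every point of ℝ³, where Φˣ := y·(β·v_xxx + v_xxxxx + (1/2)·v_x² + v_t)·f(t) and Φʸ := σ·(v - y·v_y)·f(t). -/

import Mathlib

/-- Partial derivative in `t` of a function `v (t, x, y)` given in curried form. -/
noncomputable def pt (v : ℝ → ℝ → ℝ → ℝ) : ℝ → ℝ → ℝ → ℝ :=
  fun t x y => deriv (fun s => v s x y) t

/-- Partial derivative in `x` of a function `v (t, x, y)` given in curried form. -/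
noncomputable def px (v : ℝ → ℝ → ℝ → ℝ) : ℝ → ℝ → ℝ → ℝ :=
  fun t x y => deriv (fun s => v t s y) x

/-- Partial derivative in `y` of a function `v (t, x, y)` given in curried form. -/
noncomputable def py (v : ℝ → ℝ → ℝ → ℝ) : ℝ → ℝ → ℝ → ℝ :=
  fun t x y => deriv (fun s => v t x s) y

/-- The potential Kawahara–KP operator:
`v_tx + v_x·v_xx + β·v_xxxx + v_xxxxxx - σ·v_yy`. -/
noncomputable def KKP (β σ : ℝ) (v : ℝ → ℝ → ℝ → ℝ) : ℝ → ℝ → ℝ → ℝ :=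
  fun t x y =>
    px (pt v) t x y + px v t x y * px (px v) t x y
      + β * px (px (px (px v))) t x y
      + px (px (px (px (px (px v))))) t x y
      - σ * py (py v) t x y

/-- The linearization of the potential Kawahara–KP equation at `v`, applied to `p`:
`p_tx + v_xx·p_x + v_x·p_xx + β·p_xxxx + p_xxxxxx - σ·p_yy`. -/
noncomputable def KKPlin (β σ : ℝ) (v p : ℝ → ℝ → ℝ → ℝ) : ℝ → ℝ → ℝ → ℝ :=
  fun t x y =>
    px (pt p) t x y + px (px v) t x y * px p t x y + px v t x y * px (px p) t x y
      + β * px (px (px (px p))) t x y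
      + px (px (px (px (px (px p))))) t x y
      - σ * py (py p) t x y

def Sm (v : ℝ → ℝ → ℝ → ℝ) : Prop :=
  ContDiff ℝ (⊤ : ℕ∞) (fun q : ℝ × ℝ × ℝ => v q.1 q.2.1 q.2.2)

lemma fderiv_apply_smooth {F : ℝ × ℝ × ℝ → ℝ} (h : ContDiff ℝ (⊤ : ℕ∞) F) (e : ℝ × ℝ × ℝ) :
    ContDiff ℝ (⊤ : ℕ∞) (fun q => fderiv ℝ F q e) :=
  (h.fderiv_right (m := (⊤ : ℕ∞)) (by simp)).clm_apply contDiff_const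

lemma Sm.hasT {v : ℝ → ℝ → ℝ → ℝ} (h : Sm v) (t x y : ℝ) :
    HasDerivAt (fun s => v s x y)
      (fderiv ℝ (fun q : ℝ × ℝ × ℝ => v q.1 q.2.1 q.2.2) (t, x, y) (1, 0, 0)) t :=
  HasFDerivAt.comp_hasDerivAt (f := fun s : ℝ => ((s, x, y) : ℝ × ℝ × ℝ)) t
    (ContDiff.differentiable h (by simp) (t, x, y)).hasFDerivAt
    ((hasDerivAt_id t).prodMk ((hasDerivAt_const t x).prodMk (hasDerivAt_const t y)))

lemma Sm.hasX {v : ℝ → ℝ → ℝ → ℝ} (h : Sm v) (t x y : ℝ) :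
    HasDerivAt (fun s => v t s y)
      (fderiv ℝ (fun q : ℝ × ℝ × ℝ => v q.1 q.2.1 q.2.2) (t, x, y) (0, 1, 0)) x :=
  HasFDerivAt.comp_hasDerivAt (f := fun s : ℝ => ((t, s, y) : ℝ × ℝ × ℝ)) x
    (ContDiff.differentiable h (by simp) (t, x, y)).hasFDerivAt
    ((hasDerivAt_const x t).prodMk ((hasDerivAt_id x).prodMk (hasDerivAt_const x y)))

lemma Sm.hasY {v : ℝ → ℝ → ℝ → ℝ} (h : Sm v) (t x y : ℝ) :
    HasDerivAt (fun s => v t x s)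
      (fderiv ℝ (fun q : ℝ × ℝ × ℝ => v q.1 q.2.1 q.2.2) (t, x, y) (0, 0, 1)) y :=
  HasFDerivAt.comp_hasDerivAt (f := fun s : ℝ => ((t, x, s) : ℝ × ℝ × ℝ)) y
    (ContDiff.differentiable h (by simp) (t, x, y)).hasFDerivAt
    ((hasDerivAt_const y t).prodMk ((hasDerivAt_const y x).prodMk (hasDerivAt_id y)))

lemma Sm.pt {v : ℝ → ℝ → ℝ → ℝ} (h : Sm v) : Sm (pt v) := by
  have := fderiv_apply_smooth h (1, 0, 0)
  have e := fun q : ℝ × ℝ × ℝ => (h.hasT q.1 q.2.1 q.2.2).deriv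
  exact Eq.mpr (congrArg (ContDiff ℝ (⊤ : ℕ∞)) (funext e)) this

lemma Sm.px {v : ℝ → ℝ → ℝ → ℝ} (h : Sm v) : Sm (px v) := by
  have := fderiv_apply_smooth h (0, 1, 0)
  have e := fun q : ℝ × ℝ × ℝ => (h.hasX q.1 q.2.1 q.2.2).deriv
  exact Eq.mpr (congrArg (ContDiff ℝ (⊤ : ℕ∞)) (funext e)) this

lemma Sm.py {v : ℝ → ℝ → ℝ → ℝ} (h : Sm v) : Sm (py v) := by
  have := fderiv_apply_smooth h (0, 0, 1)
  have e := fun q : ℝ × ℝ × ℝ => (h.hasY q.1 q.2.1 q.2.2).deriv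
  exact Eq.mpr (congrArg (ContDiff ℝ (⊤ : ℕ∞)) (funext e)) this

lemma Sm.dx {v : ℝ → ℝ → ℝ → ℝ} (h : Sm v) (t x y : ℝ) :
    HasDerivAt (fun s => v t s y) (_root_.px v t x y) x :=
  (h.hasX t x y).differentiableAt.hasDerivAt

lemma Sm.dy {v : ℝ → ℝ → ℝ → ℝ} (h : Sm v) (t x y : ℝ) :
    HasDerivAt (fun s => v t x s) (_root_.py v t x y) y :=
  (h.hasY t x y).differentiableAt.hasDerivAt

/-- Second topological-charge conservation law (vanishing density) for the
potential Kawahara–KP equation. -/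
theorem second_topological_charge_KKP (β σ : ℝ) (hβ : β ≠ 0) (hσ : σ = 1 ∨ σ = -1)
    (v : ℝ → ℝ → ℝ → ℝ)
    (hv : ContDiff ℝ (⊤ : ℕ∞) (fun q : ℝ × ℝ × ℝ => v q.1 q.2.1 q.2.2))
    (hsol : ∀ t x y : ℝ, KKP β σ v t x y = 0)
    (f : ℝ → ℝ) (hf : ContDiff ℝ (⊤ : ℕ∞) f)
    (Φx Φy : ℝ → ℝ → ℝ → ℝ)
    (hΦx : Φx = fun t x y =>
      y * (β * px (px (px v)) t x y + px (px (px (px (px v)))) t x y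
        + (1 / 2) * (px v t x y) ^ 2 + pt v t x y) * f t)
    (hΦy : Φy = fun t x y => σ * (v t x y - y * py v t x y) * f t) :
    ∀ t x y : ℝ, px Φx t x y + py Φy t x y = 0 := by
  intro t x y
  have h : Sm v := hv
  have e1 : px Φx t x y = y * (β * px (px (px (px v))) t x y + px (px (px (px (px (px v))))) t x y
      + px v t x y * px (px v) t x y + px (pt v) t x y) * f t := by
    rw [hΦx]
    have k := (((((((h.px.px.px.dx t x y).const_mul β).add (h.px.px.px.px.px.dx t x y)).add
      (((h.px.dx t x y).pow 2).const_mul (1 / 2))).add (h.pt.dx t x y)).const_mul y).mul_const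
      (f t)).deriv
    refine Eq.trans k ?_
    try simp only [id]
    push_cast
    ring
  have e2 : py Φy t x y = -(σ * y * py (py v) t x y * f t) := by
    rw [hΦy]
    have k := ((((h.dy t x y).sub ((hasDerivAt_id y).mul (h.py.dy t x y))).const_mul σ).mul_const
      (f t)).deriv
    refine Eq.trans k ?_
    try simp only [id]
    push_cast
    ring
  have e := hsol t x y
  unfold KKP at e
  rw [e1, e2]
  linear_combination (y * f t) * e
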